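/- arXiv:0810.4044 — 4 statements merged into one kernel-verified Lean document; each statement's English description precedes it below -/
import Mathlib

section
/- Let α ≥ 1 and β be integers with 0 < |β| < 2α and gcd(β, 2α) = 1. Then there exists exactly one finite sequence (c_1, …, c_m) of nonzero integers such that K(2c_1, …, 2c_m) ≠ 0 and the value of the even continued fraction [2c_1, …, 2c_m] equals β/(2α); moreover, for this sequence the length m is odd. -/
/-- The continuant `K(a_1, …, a_n)`: `K() = 1`, `K(a) = a`,
`K(a_j, …, a_n) = a_j·K(a_{j+1}, …, a_n) − K(a_{j+2}, …, a_n)`. -/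
def contK : List ℤ → ℤ
  | [] => 1
  | [a] => a
  | a :: b :: t => a * contK (b :: t) - contK t

/-- The value of the continued fraction `[a_1, …, a_n] = 1/(a_1 − 1/(a_2 − ⋯ − 1/a_n))`,
namely `K(a_2, …, a_n)/K(a_1, …, a_n)` (when the denominator is nonzero). -/
def cfValue (l : List ℤ) : ℚ := (contK l.tail : ℚ) / (contK l : ℚ)

def auxJ : List ℤ → ℤ
  | [] => 0
  | _ :: t => contK (t.map (fun x => 2 * x))

def auxK (c : List ℤ) : ℤ := contK (c.map (fun x => 2 * x))

lemma auxK_nil : auxK [] = 1 := by simp [auxK, contK]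
lemma auxJ_nil : auxJ [] = 0 := rfl
lemma auxJ_cons (x : ℤ) (c : List ℤ) : auxJ (x :: c) = auxK c := rfl
lemma auxK_cons (x : ℤ) (c : List ℤ) : auxK (x :: c) = 2 * x * auxK c - auxJ c := by
  cases c with
  | nil => simp [auxK, auxJ, contK]
  | cons y t => simp [auxK, auxJ, contK]

lemma aux_lt (c : List ℤ) (h : ∀ x ∈ c, x ≠ 0) : |auxJ c| < |auxK c| := by
  induction c with
  | nil => simp [auxK_nil, auxJ_nil]
  | cons x c ih =>
    have ih := ih (fun y hy => h y (List.mem_cons_of_mem _ hy))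
    have hx : 1 ≤ |x| := Int.one_le_abs (h x List.mem_cons_self)
    rw [auxJ_cons, auxK_cons]
    have h1 : |2 * x * auxK c| - |auxJ c| ≤ |2 * x * auxK c - auxJ c| := abs_sub_abs_le_abs_sub _ _
    have h2 : |2 * x * auxK c| = 2 * |x| * |auxK c| := by simp [abs_mul]
    nlinarith [abs_nonneg (auxK c)]

lemma aux_ne (c : List ℤ) (h : ∀ x ∈ c, x ≠ 0) : auxK c ≠ 0 := by
  have := aux_lt c h
  intro h0
  rw [h0, abs_zero] at this
  exact absurd this (not_lt.2 (abs_nonneg _))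

lemma aux_unique (c : List ℤ) : ∀ d : List ℤ, (∀ x ∈ c, x ≠ 0) → (∀ x ∈ d, x ≠ 0) →
    auxJ c * auxK d = auxK c * auxJ d → c = d := by
  induction c with
  | nil =>
    intro d _ hd h
    cases d with
    | nil => rfl
    | cons y d =>
      rw [auxJ_nil, auxK_nil, auxJ_cons] at h
      exact absurd (by linarith) (aux_ne d (fun z hz => hd z (List.mem_cons_of_mem _ hz)))
  | cons x c ih =>
    intro d hc hd h
    have hc' : ∀ z ∈ c, z ≠ 0 := fun z hz => hc z (List.mem_cons_of_mem _ hz)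
    cases d with
    | nil =>
      rw [auxJ_nil, auxK_nil, auxJ_cons] at h
      exact absurd (by linarith) (aux_ne c hc')
    | cons y d =>
      have hd' : ∀ z ∈ d, z ≠ 0 := fun z hz => hd z (List.mem_cons_of_mem _ hz)
      rw [auxJ_cons, auxJ_cons, auxK_cons, auxK_cons] at h
      have e : 2 * (y - x) * (auxK c * auxK d) = auxK c * auxJ d - auxJ c * auxK d := by
        linarith
      have lc := aux_lt c hc'
      have ld := aux_lt d hd'
      have pc : 0 < |auxK c| := abs_pos.2 (aux_ne c hc')
      have pd : 0 < |auxK d| := abs_pos.2 (aux_ne d hd')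
      have hxy : y - x = 0 := by
        by_contra hne
        have h1 : 1 ≤ |y - x| := Int.one_le_abs hne
        have h2 : |2 * (y - x) * (auxK c * auxK d)| = 2 * |y - x| * (|auxK c| * |auxK d|) := by
          simp [abs_mul]
        have h3 : |auxK c * auxJ d - auxJ c * auxK d| ≤
            |auxK c| * |auxJ d| + |auxJ c| * |auxK d| := by
          rw [← abs_mul, ← abs_mul]; exact abs_sub _ _
        rw [← e, h2] at h3
        have h4 : |auxK c| * |auxJ d| < |auxK c| * |auxK d| := mul_lt_mul_of_pos_left ld pc
        have h5 : |auxJ c| * |auxK d| < |auxK c| * |auxK d| := mul_lt_mul_of_pos_right lc pd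
        have h6 : 0 < |auxK c| * |auxK d| := mul_pos pc pd
        nlinarith
      have hx : x = y := by linarith
      rw [hxy] at e
      rw [hx, ih d hc' hd' (by linarith)]

lemma aux_exists (n : ℕ) : ∀ p q : ℤ, q.natAbs ≤ n → |q| < |p| → Odd (p + q) →
    ∃ c : List ℤ, (∀ x ∈ c, x ≠ 0) ∧ auxJ c * p = auxK c * q := by
  induction n with
  | zero =>
    intro p q hq _ _
    have : q = 0 := by omega
    exact ⟨[], by simp, by simp [auxJ_nil, this]⟩
  | succ n ih =>
    intro p q hq hpq hodd
    by_cases h0 : q = 0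
    · exact ⟨[], by simp, by simp [auxJ_nil, h0]⟩
    have hq0 : 2 * q ≠ 0 := by omega
    obtain ⟨k, s, hs0, hs1, he⟩ : ∃ k s : ℤ, 0 ≤ s ∧ s < 2 * |q| ∧ p + |q| = 2 * q * k + s :=
      ⟨(p + |q|) / (2 * q), (p + |q|) % (2 * q), Int.emod_nonneg _ hq0, by
        have := Int.emod_lt_abs (p + |q|) hq0
        simpa [abs_mul] using this, (Int.mul_ediv_add_emod _ _).symm⟩
    obtain ⟨w, hw⟩ : ∃ w, w = q * k := ⟨_, rfl⟩
    have he' : p + |q| = 2 * w + s := by rw [he, hw]; ring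
    have hr : |2 * w - p| < |q| := by
      obtain ⟨t, ht⟩ := hodd
      rcases abs_cases q with ⟨h, _⟩ | ⟨h, _⟩ <;> rw [abs_lt] <;> rw [h] at hs1 he' ⊢ <;>
        constructor <;> omega
    have hk : k ≠ 0 := by
      rintro rfl
      simp [hw] at hr
      omega
    obtain ⟨c, hc, hce⟩ := ih q (2 * w - p) (by rw [Int.abs_eq_natAbs, Int.abs_eq_natAbs] at hr; omega) hr (by
      obtain ⟨t, ht⟩ := hodd
      exact ⟨w + t - p, by linarith⟩)
    refine ⟨k :: c, ?_, ?_⟩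
    · intro x hx
      rcases List.mem_cons.1 hx with rfl | hx
      · exact hk
      · exact hc x hx
    · rw [auxJ_cons, auxK_cons]
      rw [hw] at hce
      linear_combination hce

lemma aux_parity (c : List ℤ) : (Even c.length → Odd (auxK c) ∧ Even (auxJ c)) ∧
    (Odd c.length → Even (auxK c) ∧ Odd (auxJ c)) := by
  induction c with
  | nil => simp [auxK_nil, auxJ_nil]
  | cons x c ih =>
    rw [auxJ_cons, auxK_cons, List.length_cons]
    constructor
    · intro h
      have := ih.2 (by grind)
      have e : Even (2 * x * auxK c) := ⟨x * auxK c, by ring⟩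
      exact ⟨e.sub_odd this.2, this.1⟩
    · intro h
      have := ih.1 (by grind)
      have e : Even (2 * x * auxK c) := ⟨x * auxK c, by ring⟩
      exact ⟨e.sub this.2, this.1⟩

lemma aux_iff (α β : ℤ) (hα : 1 ≤ α) (hβ : |β| < 2 * α) (c : List ℤ) :
    ((∀ x ∈ c, x ≠ 0) ∧ contK (c.map (fun x => 2 * x)) ≠ 0 ∧
        cfValue (c.map (fun x => 2 * x)) = (β : ℚ) / (2 * (α : ℚ))) →
    (∀ x ∈ c, x ≠ 0) ∧ auxJ c * (2 * α) = auxK c * β := by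
  rintro ⟨h1, h2, h3⟩
  refine ⟨h1, ?_⟩
  have ha : (2 * (α : ℚ)) ≠ 0 := by
    have : (α : ℚ) ≠ 0 := by exact_mod_cast (by omega : α ≠ 0)
    simpa using this
  have hk : ((contK (c.map (fun x => 2 * x)) : ℤ) : ℚ) ≠ 0 := by exact_mod_cast h2
  unfold cfValue at h3
  rw [div_eq_div_iff hk ha] at h3
  have h4 : contK (c.map (fun x => 2 * x)).tail * (2 * α) =
    β * contK (c.map (fun x => 2 * x)) := by exact_mod_cast h3
  cases c with
  | nil =>
    simp [contK] at h4
    have := le_abs_self β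
    omega
  | cons x c =>
    rw [mul_comm (auxK _)]
    exact h4

/-- For integers `α ≥ 1` and `β` with `0 < |β| < 2α` and `gcd(β, 2α) = 1`, there is exactly
one finite sequence `(c_1, …, c_m)` of nonzero integers with `K(2c_1, …, 2c_m) ≠ 0` whose
even continued fraction `[2c_1, …, 2c_m]` has value `β/(2α)`; moreover this sequence has
odd length. -/
theorem unique_even_continued_fraction
    (α β : ℤ) (hα : 1 ≤ α) (hβ0 : 0 < |β|) (hβ : |β| < 2 * α)
    (hgcd : Int.gcd β (2 * α) = 1) :
    (∃! c : List ℤ,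
      (∀ x ∈ c, x ≠ 0) ∧ contK (c.map (fun x => 2 * x)) ≠ 0 ∧
        cfValue (c.map (fun x => 2 * x)) = (β : ℚ) / (2 * (α : ℚ))) ∧
    (∀ c : List ℤ,
      ((∀ x ∈ c, x ≠ 0) ∧ contK (c.map (fun x => 2 * x)) ≠ 0 ∧
        cfValue (c.map (fun x => 2 * x)) = (β : ℚ) / (2 * (α : ℚ))) →
      Odd c.length) := by
  have hodd : Odd β := by
    by_contra h
    rw [Int.not_odd_iff_even] at h
    have := Int.dvd_coe_gcd h.two_dvd (Dvd.intro α rfl : (2:ℤ) ∣ 2 * α)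
    rw [hgcd] at this
    omega
  have hβne : β ≠ 0 := abs_pos.1 hβ0
  refine ⟨?_, ?_⟩
  · obtain ⟨c, hc, hce⟩ := aux_exists _ (2 * α) β le_rfl
      (by rwa [abs_of_pos (by omega : 0 < 2 * α)])
      ((even_two_mul α).add_odd hodd)
    have hK := aux_ne c hc
    refine ⟨c, ⟨hc, hK, ?_⟩, ?_⟩
    · cases c with
      | nil =>
        rw [auxJ_nil, auxK_nil] at hce
        omega
      | cons x c =>
        have ha : (2 * (α : ℚ)) ≠ 0 := by
          have : (α : ℚ) ≠ 0 := by exact_mod_cast (by omega : α ≠ 0)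
          simpa using this
        have hk : ((auxK (x :: c) : ℤ) : ℚ) ≠ 0 := by exact_mod_cast hK
        change ((auxJ (x :: c) : ℤ) : ℚ) / ((auxK (x :: c) : ℤ) : ℚ) = _
        rw [div_eq_div_iff hk ha, mul_comm (β : ℚ)]
        exact_mod_cast hce
    · intro d hd
      obtain ⟨hd, hde⟩ := aux_iff α β hα hβ d hd
      apply aux_unique d c hd hc
      have : (auxJ d * auxK c) * β = (auxK d * auxJ c) * β := by
        linear_combination -auxJ d * hce + auxJ c * hde
      exact mul_right_cancel₀ hβne this
  · intro c h
    obtain ⟨hc, hce⟩ := aux_iff α β hα hβ c h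
    by_contra hn
    rw [Nat.not_odd_iff_even] at hn
    have h1 := ((aux_parity c).1 hn).1.mul hodd
    rw [← hce, ← Int.not_even_iff_odd] at h1
    exact h1 ⟨auxJ c * α, by ring⟩
end

section
/- Let M(a) denote the 2×2 integer matrix with first row (a, −1) and second row (1, 0). Then for every integer c ≥ 1 and every ε ∈ {1, −1}, M(2ε)·(M(0)·M(2ε))^{c−1} = (−1)^{c−1}·M(2εc). (This expresses that replacing an entry 2εc, at an odd position of an even continued fraction, by the alternating string 2ε, 0, 2ε, 0, …, 2ε of length 2c−1 does not change the value represented, i.e., the standard continued fraction S and its modified form S* correspond to the same rational number.) -/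
/-- The matrix `M(a) = [[a, −1], [1, 0]]` associated to a continued-fraction entry `a`. -/
def cfMat (a : ℤ) : Matrix (Fin 2) (Fin 2) ℤ := !![a, -1; 1, 0]

/-- For every integer `c ≥ 1` and every `ε ∈ {1, −1}`,
`M(2ε)·(M(0)·M(2ε))^{c−1} = (−1)^{c−1}·M(2εc)`: replacing an entry `2εc` of an even
continued fraction by the alternating string `2ε, 0, 2ε, 0, …, 2ε` of length `2c−1`
does not change the value represented. -/
theorem cfMat_modified_form (c : ℕ) (hc : 1 ≤ c) (ε : ℤ) (hε : ε = 1 ∨ ε = -1) :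
    cfMat (2 * ε) * (cfMat 0 * cfMat (2 * ε)) ^ (c - 1) =
      ((-1 : ℤ) ^ (c - 1)) • cfMat (2 * ε * (c : ℤ)) := by
  obtain ⟨n, rfl⟩ : ∃ n, c = n + 1 := ⟨c - 1, by omega⟩
  clear hc hε
  rw [Nat.add_sub_cancel]
  have step : ∀ a b : ℤ, cfMat b * (cfMat 0 * cfMat a) = (-1 : ℤ) • cfMat (b + a) := by
    intro a b
    ext i j
    fin_cases i <;> fin_cases j <;> simp [cfMat, Matrix.mul_apply, Fin.sum_univ_two] <;> ring
  induction n with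
  | zero => simp
  | succ k ih =>
    rw [pow_succ, ← mul_assoc, ih, smul_mul_assoc, step, smul_smul, ← pow_succ]
    congr 2
    push_cast
    ring
end

section
/- Let p ≥ 2 be an integer and let F be the free group on the 2p−1 generators a_1, …, a_{p−1}, x_1, z_2, x_3, x_4, …, x_p. Put D = z_2·x_3·x_4⋯x_p ∈ F. For an integer b ≥ 2 define δ = x_1·(D^{−1}·a_1^{−1})·(x_1^{−1}·D·x_1·D^{−1}·a_1^{−1})^{b−2}·(x_1^{−1}·D·x_1). Then x_1 does not belong to the subgroup of F generated by the 2p−1 elements a_1, …, a_{p−1}, z_2, x_3, …, x_p, δ. -/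
/-- The free generators `a_1, …, a_{p−1}` of the free group of rank `2p−1`. -/
def genA (p : ℕ) (i : Fin (p - 1)) : FreeGroup (Fin (p - 1) ⊕ Fin p) :=
  FreeGroup.of (Sum.inl i)

/-- The free generators `x_1, z_2, x_3, …, x_p` (indexed by `Fin p`, with index `0`
giving `x_1` and index `1` giving `z_2`) of the free group of rank `2p−1`. -/
def genX (p : ℕ) (j : Fin p) : FreeGroup (Fin (p - 1) ⊕ Fin p) :=
  FreeGroup.of (Sum.inr j)

/-- `D = z_2·x_3·x_4 ⋯ x_p`. -/
def bigD (p : ℕ) : FreeGroup (Fin (p - 1) ⊕ Fin p) :=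
  ((List.ofFn (genX p)).tail).prod

open Matrix in
/-- Upper triangular subgroup. -/
def upTri : Subgroup (GL (Fin 2) ℝ) where
  carrier := {g | g.val 1 0 = 0}
  one_mem' := by simp
  mul_mem' := by
    intro a b ha hb
    simp only [Set.mem_ofPred_eq] at *
    simp [Matrix.mul_apply, Fin.sum_univ_two, ha, hb]
  inv_mem' := by
    intro a ha
    simp only [Set.mem_ofPred_eq] at *
    simp [Matrix.inv_def, Matrix.adjugate_fin_two, ha]

theorem mem_upTri (g : GL (Fin 2) ℝ) : g ∈ upTri ↔ g.val 1 0 = 0 := Iff.rfl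

theorem rot_pow (t : ℝ) (n : ℕ) :
    (!![Real.cos t, -Real.sin t; Real.sin t, Real.cos t] : Matrix (Fin 2) (Fin 2) ℝ) ^ n =
      !![Real.cos (n * t), -Real.sin (n * t); Real.sin (n * t), Real.cos (n * t)] := by
  induction n with
  | zero => simp [Matrix.one_fin_two]
  | succ n ih =>
    rw [pow_succ, ih]
    have : ((n + 1 : ℕ) : ℝ) * t = n * t + t := by push_cast; ring
    rw [this, Real.cos_add, Real.sin_add, Matrix.mul_fin_two]
    congr! 3
    all_goals (try ring_nf)

theorem exists_mats (n : ℕ) : ∃ X D C : GL (Fin 2) ℝ,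
    X ∉ upTri ∧ D ∈ upTri ∧ C ∈ upTri ∧
    X * C * (X⁻¹ * D * X * C) ^ n * (X⁻¹ * D * X) ∈ upTri := by
  set t : ℝ := Real.pi / (2 * ((n + 2 : ℕ) : ℝ)) with ht
  have hn : (0 : ℝ) < ((n + 2 : ℕ) : ℝ) := by positivity
  have hc : 0 < Real.cos t := by
    apply Real.cos_pos_of_mem_Ioo
    have h0 : 0 < t := by positivity
    refine ⟨by linarith [Real.pi_pos], ?_⟩
    rw [ht]
    apply div_lt_div_of_pos_left Real.pi_pos (by norm_num)
    push_cast
    have : (0 : ℝ) ≤ n := by positivity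
    linarith
  have hc' := hc.ne'
  have hnt : ((n + 2 : ℕ) : ℝ) * t = Real.pi / 2 := by
    rw [ht]; field_simp
  let s := Real.sin t / Real.cos t
  let X : GL (Fin 2) ℝ := Matrix.GeneralLinearGroup.mkOfDetNeZero !![0, 1; 1, 0] (by simp)
  let D : GL (Fin 2) ℝ := Matrix.GeneralLinearGroup.mkOfDetNeZero !![1, s; 0, 1] (by simp)
  let E : GL (Fin 2) ℝ := Matrix.GeneralLinearGroup.mkOfDetNeZero !![1, 0; s, 1] (by simp)
  let C : GL (Fin 2) ℝ := Matrix.GeneralLinearGroup.mkOfDetNeZero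
    !![Real.cos t, -Real.sin t; 0, 1 / Real.cos t] (by simp [hc'])
  have hX : X.val = !![0, 1; 1, 0] := rfl
  have hD : D.val = !![1, s; 0, 1] := rfl
  have hE : E.val = !![1, 0; s, 1] := rfl
  have hC : C.val = !![Real.cos t, -Real.sin t; 0, 1 / Real.cos t] := rfl
  have hXE : X⁻¹ * D * X = E := by
    rw [mul_assoc, inv_mul_eq_iff_eq_mul]
    apply Units.ext
    rw [Units.val_mul, Units.val_mul, hX, hD, hE]
    simp
  have hM : (E * C).val = !![Real.cos t, -Real.sin t; Real.sin t, Real.cos t] := by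
    rw [Units.val_mul, hE, hC, Matrix.mul_fin_two]
    have h1 := Real.sin_sq_add_cos_sq t
    have h2 : s * -Real.sin t + 1 * (1 / Real.cos t) = Real.cos t := by
      simp only [s]; field_simp; linarith
    have h3 : s * Real.cos t = Real.sin t := by simp only [s]; field_simp
    rw [h2, h3]; simp
  have hMp : ((E * C) ^ (n + 2)).val = !![0, -1; 1, 0] := by
    rw [Units.val_pow_eq_pow_val, hM, rot_pow, hnt]; simp
  have hCm : C ∈ upTri := by rw [mem_upTri, hC]; simp
  refine ⟨X, D, C, ?_, ?_, hCm, ?_⟩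
  · rw [mem_upTri, hX]; simp
  · rw [mem_upTri, hD]; simp
  · rw [hXE]
    have key : X * C * (E * C) ^ n * E = (X * E⁻¹ * (E * C) ^ (n + 2)) * C⁻¹ := by
      rw [pow_succ, pow_succ']
      simp only [mul_assoc, inv_mul_cancel_left, mul_inv_cancel, mul_one]
    rw [key]
    refine mul_mem ?_ (inv_mem hCm)
    rw [mem_upTri, Units.val_mul, Units.val_mul, hMp, hX]
    have hEi : (E⁻¹).val = !![1, 0; -s, 1] := by
      have : E⁻¹ = Matrix.GeneralLinearGroup.mkOfDetNeZero !![1, 0; -s, 1] (by simp) := by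
        rw [inv_eq_iff_mul_eq_one]
        apply Units.ext
        rw [Units.val_mul, hE]
        change _ * !![1, 0; -s, 1] = _
        simp [Matrix.one_fin_two]
      rw [this]; rfl
    rw [hEi]
    simp

/-- Let `F` be the free group on the `2p−1` generators
`a_1, …, a_{p−1}, x_1, z_2, x_3, …, x_p` (`p ≥ 2`), `D = z_2·x_3⋯x_p`, and for an
integer `b ≥ 2` let
`δ = x_1·(D⁻¹·a_1⁻¹)·(x_1⁻¹·D·x_1·D⁻¹·a_1⁻¹)^{b−2}·(x_1⁻¹·D·x_1)`.
Then `x_1` is not in the subgroup generated by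
`a_1, …, a_{p−1}, z_2, x_3, …, x_p, δ`. -/
theorem x1_not_in_subgroup_pos_case (p : ℕ) (hp : 2 ≤ p) (b : ℤ) (hb : 2 ≤ b) :
    genX p ⟨0, by omega⟩ ∉
      Subgroup.closure
        ({g | ∃ i : Fin (p - 1), g = genA p i} ∪
         {g | ∃ j : Fin p, (j : ℕ) ≠ 0 ∧ g = genX p j} ∪
         {genX p ⟨0, by omega⟩ * ((bigD p)⁻¹ * (genA p ⟨0, by omega⟩)⁻¹) *
            ((genX p ⟨0, by omega⟩)⁻¹ * bigD p * genX p ⟨0, by omega⟩ *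
              (bigD p)⁻¹ * (genA p ⟨0, by omega⟩)⁻¹) ^ (b - 2) *
            ((genX p ⟨0, by omega⟩)⁻¹ * bigD p * genX p ⟨0, by omega⟩)}) := by
  obtain ⟨n, rfl⟩ : ∃ n : ℕ, b = n + 2 := ⟨(b - 2).toNat, by omega⟩
  obtain ⟨q, rfl⟩ : ∃ q, p = q + 2 := ⟨p - 2, by omega⟩
  obtain ⟨X, D, C, hX, hD, hC, hδ⟩ := exists_mats n
  let f : Fin (q + 2 - 1) ⊕ Fin (q + 2) → GL (Fin 2) ℝ :=
    Sum.elim (fun i => if (i : ℕ) = 0 then (D * C)⁻¹ else 1)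
      (fun j => if (j : ℕ) = 0 then X else if (j : ℕ) = 1 then D else 1)
  let φ := FreeGroup.lift f
  have hφA : ∀ i, φ (genA (q + 2) i) = if (i : ℕ) = 0 then (D * C)⁻¹ else 1 := by
    intro i; simp [φ, genA, f]
  have hφX : ∀ j, φ (genX (q + 2) j) =
      if (j : ℕ) = 0 then X else if (j : ℕ) = 1 then D else 1 := by
    intro j; simp [φ, genX, f]
  have hφD : φ (bigD (q + 2)) = D := by
    unfold bigD
    rw [List.ofFn_succ, List.tail_cons, List.ofFn_succ, List.prod_cons, map_mul, hφX,
      map_list_prod, List.prod_eq_one]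
    · simp
    · intro x hx
      simp only [List.mem_map, List.mem_ofFn] at hx
      obtain ⟨_, ⟨i, rfl⟩, rfl⟩ := hx
      rw [hφX]; simp
  intro hmem
  apply hX
  suffices h : genX (q + 2) ⟨0, by omega⟩ ∈ upTri.comap φ by
    rw [Subgroup.mem_comap, hφX] at h
    simpa using h
  refine (Subgroup.closure_le _).2 ?_ hmem
  · rintro g ((⟨i, rfl⟩ | ⟨j, hj, rfl⟩) | hg)
    · change φ _ ∈ upTri
      rw [hφA]; split_ifs
      · exact inv_mem (mul_mem hD hC)
      · exact one_mem _
    · change φ _ ∈ upTri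
      rw [hφX, if_neg hj]; split_ifs
      · exact hD
      · exact one_mem _
    · rw [Set.mem_singleton_iff] at hg
      subst hg
      change φ _ ∈ upTri
      have e : ((n : ℤ) + 2 - 2) = (n : ℤ) := by ring
      rw [e, zpow_natCast]
      simp only [map_mul, map_inv, map_pow, hφA, hφX, hφD, if_true]
      convert hδ using 1
      have h1 : D⁻¹ * ((D * C)⁻¹)⁻¹ = C := by group
      rw [mul_assoc (X⁻¹ * D * X), h1]
end

section
/- Let p ≥ 2 be an integer and let F be the free group on the 2p−1 generators a_1, …, a_{p−1}, x_1, z_2, x_3, x_4, …, x_p. Put D = z_2·x_3·x_4⋯x_p ∈ F. For an integer q ≥ 1 define δ' = x_1·(a_1·D·x_1^{−1}·D^{−1}·x_1)^q. Then x_1 does not belong to the subgroup of F generated by the 2p−1 elements a_1, …, a_{p−1}, z_2, x_3, …, x_p, δ'. -/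
/-- The action on `ℚ`: `a_i ↦ id`, `x_1 ↦ (t ↦ t + 1)`, `z_2 ↦ (t ↦ β t)`, the rest trivial. -/
noncomputable def actGen (p : ℕ) (β : ℚ) (hβ : β ≠ 0) :
    Fin (p - 1) ⊕ Fin p → Equiv.Perm ℚ
  | Sum.inl _ => 1
  | Sum.inr j => if (j : ℕ) = 0 then Equiv.addRight 1
      else if (j : ℕ) = 1 then Equiv.mulRight₀ β hβ else 1

theorem lift_bigD (p : ℕ) (hp : 2 ≤ p) (β : ℚ) (hβ : β ≠ 0) :
    FreeGroup.lift (actGen p β hβ) (bigD p) = Equiv.mulRight₀ β hβ := by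
  obtain ⟨n, rfl⟩ : ∃ n, p = n + 2 := ⟨p - 2, by omega⟩
  unfold bigD
  rw [List.ofFn_succ, List.tail_cons, List.ofFn_succ, List.prod_cons, map_mul, map_list_prod,
    List.prod_eq_one]
  · simp [genX, actGen]
  · intro x hx
    simp only [List.mem_map, List.mem_ofFn] at hx
    obtain ⟨_, ⟨j, rfl⟩, rfl⟩ := hx
    simp [genX, actGen]

theorem addRight_pow_apply (c : ℚ) (n : ℕ) (t : ℚ) :
    ((Equiv.addRight c : Equiv.Perm ℚ) ^ n) t = t + n * c := by
  induction n generalizing t with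
  | zero => simp
  | succ k ih =>
    rw [pow_succ, Equiv.Perm.mul_apply, ih]
    simp only [Equiv.coe_addRight]
    push_cast
    ring

/-- Let `F` be the free group on the `2p−1` generators
`a_1, …, a_{p−1}, x_1, z_2, x_3, …, x_p` (`p ≥ 2`), `D = z_2·x_3⋯x_p`, and for an
integer `q ≥ 1` let `δ' = x_1·(a_1·D·x_1⁻¹·D⁻¹·x_1)^q`.
Then `x_1` is not in the subgroup generated by
`a_1, …, a_{p−1}, z_2, x_3, …, x_p, δ'`. -/
theorem x1_not_in_subgroup_neg_case (p : ℕ) (hp : 2 ≤ p) (q : ℤ) (hq : 1 ≤ q) :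
    genX p ⟨0, by omega⟩ ∉
      Subgroup.closure
        ({g | ∃ i : Fin (p - 1), g = genA p i} ∪
         {g | ∃ j : Fin p, (j : ℕ) ≠ 0 ∧ g = genX p j} ∪
         {genX p ⟨0, by omega⟩ *
            (genA p ⟨0, by omega⟩ * bigD p * (genX p ⟨0, by omega⟩)⁻¹ *
              (bigD p)⁻¹ * genX p ⟨0, by omega⟩) ^ q}) := by
  intro hmem
  obtain ⟨n, rfl⟩ : ∃ n : ℕ, q = n := ⟨q.toNat, by omega⟩
  have hn : (n : ℚ) ≠ 0 := by
    have : n ≠ 0 := by omega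
    exact_mod_cast this
  have hβ : (1 + 1 / n : ℚ) ≠ 0 := by positivity
  set φ := FreeGroup.lift (actGen p (1 + 1 / n : ℚ) hβ) with hφ
  have hx : φ (genX p ⟨0, by omega⟩) = Equiv.addRight 1 := by simp [hφ, genX, actGen]
  have hD : φ (bigD p) = Equiv.mulRight₀ (1 + 1 / n : ℚ) hβ := lift_bigD p hp _ hβ
  have ha : ∀ i, φ (genA p i) = 1 := by intro i; simp [hφ, genA, actGen]
  have key : φ (genX p ⟨0, by omega⟩) ∈ MulAction.stabilizer (Equiv.Perm ℚ) (0 : ℚ) := by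
    rw [← Subgroup.mem_comap]
    refine (Subgroup.closure_le _).2 ?_ hmem
    rintro g ((⟨i, rfl⟩ | ⟨j, hj, rfl⟩) | hg)
    · simp [ha]
    · simp only [SetLike.mem_coe, Subgroup.mem_comap, MulAction.mem_stabilizer_iff,
        Equiv.Perm.smul_def]
      simp only [hφ, genX, actGen, FreeGroup.lift_apply_of, if_neg hj]
      split_ifs <;> simp
    · rw [Set.mem_singleton_iff] at hg
      subst hg
      have hc : (1 : Equiv.Perm ℚ) * Equiv.mulRight₀ (1 + 1 / n : ℚ) hβ *
          (Equiv.addRight 1 : Equiv.Perm ℚ)⁻¹ * (Equiv.mulRight₀ (1 + 1 / n : ℚ) hβ)⁻¹ *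
          Equiv.addRight 1 = (Equiv.addRight (-1 / n : ℚ) : Equiv.Perm ℚ) := by
        ext t
        have h1 : ∀ s : ℚ, (Equiv.addRight 1 : Equiv.Perm ℚ)⁻¹ s = s - 1 := by
          intro s; rw [Equiv.Perm.inv_eq_iff_eq]; simp
        have h2 : ∀ s : ℚ, (Equiv.mulRight₀ (1 + 1 / n : ℚ) hβ)⁻¹ s = s / (1 + 1 / n) := by
          intro s; rw [Equiv.Perm.inv_eq_iff_eq]
          change s = s / (1 + 1 / n) * (1 + 1 / n)
          rw [div_mul_cancel₀ _ hβ]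
        simp only [Equiv.Perm.mul_apply, h1, h2, Equiv.Perm.one_apply]
        change ((t + 1) / (1 + 1 / n) - 1) * (1 + 1 / n) = t + -1 / n
        rw [sub_mul, div_mul_cancel₀ _ hβ]
        ring
      simp only [SetLike.mem_coe, Subgroup.mem_comap, MulAction.mem_stabilizer_iff,
        Equiv.Perm.smul_def, map_mul, map_pow, map_inv, hx, hD, ha, hc, zpow_natCast]
      rw [Equiv.Perm.mul_apply, addRight_pow_apply]
      simp only [Equiv.coe_addRight]
      field_simp
      norm_num
  rw [hx, MulAction.mem_stabilizer_iff, Equiv.Perm.smul_def] at key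
  simp at key
end
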